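/- arXiv:2204.08076 — 2 statements merged into one kernel-verified Lean document; each statement's English description precedes it below -/
import Mathlib

section
/- In the parabolic case α = β = 1 (so X = [[1,1],[0,1]] and Y = [[1,0],[z,1]]), for any z ∈ ℂ and any Farey neighbours p/q < r/s in lowest terms with p, r ≥ 0, 1 ≤ s < q, qr − ps = 1, and both fractions in [0,1], one has Φ_{p/q}(z)·Φ_{r/s}(z) + Φ_{(p+r)/(q+s)}(z) + Φ_{(p−r)/(q−s)}(z) = 8. -/
/-- Modified ceiling: `⌈x⌉` if `x ∉ ℤ`, and `x + 1` if `x ∈ ℤ`. -/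
def mceil (x : ℚ) : ℤ := if x.den = 1 then x.num + 1 else ⌈x⌉

/-- The sign `ε_i = (−1)^{⌈pi/q⌉' + i + 1}` of the `i`-th letter of the Farey word `W_{p/q}`. -/
def fareySign (p q i : ℕ) : ℤˣ := (-1) ^ (mceil ((p * i : ℚ) / q) + (i : ℤ) + 1)

/-- The matrix `X = [[α, 1], [0, α⁻¹]]`. -/
noncomputable def Xmat (α : ℂ) : Matrix (Fin 2) (Fin 2) ℂ := !![α, 1; 0, α⁻¹]

/-- The matrix `Y = [[β, 0], [z, β⁻¹]]`. -/
noncomputable def Ymat (β z : ℂ) : Matrix (Fin 2) (Fin 2) ℂ := !![β, 0; z, β⁻¹]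

/-- The `i`-th letter (`1 ≤ i ≤ 2q`) of the Farey word `W_{p/q}`, interpreted as a matrix:
it is `Y^{ε_i}` if `i` is odd and `X^{ε_i}` if `i` is even. -/
noncomputable def fareyLetterM (α β z : ℂ) (p q i : ℕ) : Matrix (Fin 2) (Fin 2) ℂ :=
  let M := if i % 2 = 1 then Ymat β z else Xmat α
  if fareySign p q i = 1 then M else M⁻¹

/-- The Farey word `W_{p/q}(z)`, the product `ℓ_1 ℓ_2 ⋯ ℓ_{2q}` of its letters interpreted
as matrices. -/
noncomputable def fareyWord (α β z : ℂ) (p q : ℕ) : Matrix (Fin 2) (Fin 2) ℂ :=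
  ((List.range (2 * q)).map (fun j => fareyLetterM α β z p q (j + 1))).prod

/-- The Farey polynomial `Φ_{p/q}(z) = tr W_{p/q}(z)`. -/
noncomputable def fareyPoly (α β z : ℂ) (p q : ℕ) : ℂ := Matrix.trace (fareyWord α β z p q)

open scoped MatrixGroups

/-! ### Products of finite sequences in a group -/

/-- The product `f 1 * f 2 * ⋯ * f n`. -/
def seqProd {G : Type*} [Group G] (f : ℕ → G) (n : ℕ) : G :=
  ((List.range n).map (fun j => f (j + 1))).prod

theorem seqProd_succ {G : Type*} [Group G] (f : ℕ → G) (n : ℕ) :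
    seqProd f (n + 1) = seqProd f n * f (n + 1) := by
  simp [seqProd, List.range_succ]

theorem seqProd_add {G : Type*} [Group G] (f : ℕ → G) (m n : ℕ) :
    seqProd f (m + n) = seqProd f m * seqProd (fun k => f (m + k)) n := by
  induction n with
  | zero => simp [seqProd]
  | succ n ih => rw [← add_assoc, seqProd_succ, ih, seqProd_succ, mul_assoc, add_assoc]

theorem seqProd_congr {G : Type*} [Group G] {f g : ℕ → G} {n : ℕ}
    (h : ∀ i, 1 ≤ i → i ≤ n → f i = g i) : seqProd f n = seqProd g n := by
  induction n with
  | zero => rfl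
  | succ n ih =>
    rw [seqProd_succ, seqProd_succ, ih fun i h1 h2 => h i h1 (by omega), h _ (by omega) le_rfl]

theorem seqProd_conj {G : Type*} [Group G] (f : ℕ → G) (g : G) (n : ℕ) :
    seqProd (fun i => g * f i * g⁻¹) n = g * seqProd f n * g⁻¹ := by
  induction n with
  | zero => simp [seqProd]
  | succ n ih => rw [seqProd_succ, ih, seqProd_succ]; group

theorem seqProd_one_add {G : Type*} [Group G] (f : ℕ → G) (n : ℕ) :
    seqProd f (1 + n) = f 1 * seqProd (fun k => f (1 + k)) n := by
  rw [seqProd_add]; simp [seqProd]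

theorem seqProd_eq_inv {G : Type*} [Group G] {f g : ℕ → G} {n : ℕ}
    (h : ∀ k, 1 ≤ k → k ≤ n → g k = (f (n + 1 - k))⁻¹) :
    seqProd g n = (seqProd f n)⁻¹ := by
  induction n generalizing g with
  | zero => simp [seqProd]
  | succ n ih =>
    rw [seqProd_succ f, mul_inv_rev, add_comm n 1, seqProd_one_add, h 1 le_rfl (by omega),
      ih fun k h1 h2 => by rw [h (1 + k) (by omega) (by omega)]; congr 2; omega]
    congr 3; omega

/-- A sequence of length `2n` that is antisymmetric about its `n`-th term. -/
theorem seqProd_antisymm {G : Type*} [Group G] {f : ℕ → G} {n : ℕ} (hn : 1 ≤ n)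
    (h : ∀ k, 1 ≤ k → k < n → f (n + k) = (f (n - k))⁻¹) :
    seqProd f (2 * n) = seqProd f (n - 1) * f n * (seqProd f (n - 1))⁻¹ * f (2 * n) := by
  obtain ⟨m, rfl⟩ : ∃ m, n = m + 1 := ⟨n - 1, by omega⟩
  have e : 2 * (m + 1) = (m + 1) + m + 1 := by ring
  rw [e, seqProd_succ, seqProd_add, seqProd_succ, Nat.add_sub_cancel]
  congr 2
  exact seqProd_eq_inv fun k h1 h2 => h k h1 (by omega)

/-! ### Signs of Farey words -/

/-- The sign `(-1) ^ (⌊p i / q⌋ + i)`. -/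
def floorSign (p q i : ℕ) : ℤˣ := (-1) ^ (p * i / q + i)

theorem mceil_eq_floor_add_one (x : ℚ) : mceil x = ⌊x⌋ + 1 := by
  unfold mceil
  split_ifs with h
  · have : x = (x.num : ℚ) := ((Rat.den_eq_one_iff x).1 h).symm
    rw [this, Int.floor_intCast, Rat.num_intCast]
  · rw [Int.ceil_eq_floor_add_one_iff_notMem]
    rintro ⟨n, rfl⟩
    exact h (Rat.den_intCast n)

theorem fareySign_eq_floorSign (p q i : ℕ) : fareySign p q i = floorSign p q i := by
  have hf : ⌊(p * i : ℚ) / q⌋ = ((p * i / q : ℕ) : ℤ) := by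
    have := Rat.floor_intCast_div_natCast ((p * i : ℕ) : ℤ) q
    push_cast at this ⊢
    exact this
  rw [fareySign, mceil_eq_floor_add_one, hf, floorSign]
  have : ((p * i / q : ℕ) : ℤ) + 1 + (i : ℤ) + 1 = ((p * i / q + i + 2 : ℕ) : ℤ) := by
    push_cast; ring
  rw [this, zpow_natCast, pow_add _ _ 2]
  simp

theorem floorSign_two_mul (m : ℕ) {n : ℕ} (hn : 1 ≤ n) : floorSign m n (2 * n) = 1 := by
  have : m * (2 * n) / n = 2 * m := by
    rw [show m * (2 * n) = 2 * m * n by ring, Nat.mul_div_cancel _ hn]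
  rw [floorSign, this, ← mul_add, pow_mul]
  simp

theorem floorSign_self (m : ℕ) {n : ℕ} (hn : 1 ≤ n) : floorSign m n n = (-1) ^ (m + n) := by
  rw [floorSign, Nat.mul_div_cancel _ hn]

theorem floorSign_add_eq_neg {m n k : ℕ} (hmn : Nat.Coprime m n) (hk : 1 ≤ k) (hkn : k < n) :
    floorSign m n (n + k) = -floorSign m n (n - k) := by
  have hn : 0 < n := by omega
  have hnd : ¬ n ∣ m * k := fun h =>
    absurd (Nat.le_of_dvd hk (hmn.symm.dvd_of_dvd_mul_left h)) (by omega)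
  set d := m * k / n with hd
  have h1 : n * d + m * k % n = m * k := Nat.div_add_mod _ _
  have h2 : 0 < m * k % n := Nat.pos_of_ne_zero fun h => hnd (Nat.dvd_of_mod_eq_zero h)
  have h3 : m * k % n < n := Nat.mod_lt _ hn
  have hdm : d + 1 ≤ m := by
    by_contra hc
    have : m ≤ d := by omega
    have h4 : n * m ≤ n * d := Nat.mul_le_mul_left _ this
    nlinarith
  have ha : m * (n + k) / n = m + d := by
    rw [mul_add, mul_comm m n, Nat.mul_add_div hn]
  obtain ⟨l, rfl⟩ : ∃ l, n = l + k := ⟨n - k, by omega⟩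
  obtain ⟨c, hc⟩ : ∃ c, m = d + 1 + c := ⟨m - (d + 1), by omega⟩
  have hb : m * l / (l + k) = c := by
    apply Nat.div_eq_of_lt_le <;> nlinarith
  rw [floorSign, floorSign, ha, Nat.add_sub_cancel, hb]
  have : m + d + (l + k + k) = (c + l) + 1 + 2 * (d + k) := by omega
  rw [this, pow_add _ _ (2 * _), pow_mul, pow_succ]
  simp

section Neighbours

variable {p q r s : ℕ}

theorem mediant_div_left (hs : 1 ≤ s) (hsq : s < q) (hnbr : q * r = p * s + 1) {i : ℕ}
    (hi : i ≤ 2 * q) (hne : i ≠ q + s) : (p + r) * i / (q + s) = p * i / q := by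
  have hq : 0 < q := by omega
  set n := p * i / q with hn
  have h1 : q * n + p * i % q = p * i := Nat.div_add_mod _ _
  have h3 : p * i % q < q := Nat.mod_lt _ hq
  apply Nat.div_eq_of_lt_le
  · refine Nat.le_of_mul_le_mul_left (c := q) ?_ hq
    have h4 : q * n * (q + s) ≤ p * i * (q + s) := Nat.mul_le_mul_right _ (by omega)
    have h5 : q * r * i = (p * s + 1) * i := by rw [hnbr]
    nlinarith
  · by_contra hc
    push Not at hc
    obtain ⟨t, ht⟩ : ∃ t, q * (n + 1) = p * i + t := ⟨q - p * i % q, by rw [mul_add]; omega⟩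
    have ht1 : 1 ≤ t := by nlinarith
    have h5 : t * (q + s) ≤ i := by nlinarith
    have ht2 : t < 2 := by
      by_contra h
      nlinarith
    obtain rfl : t = 1 := by omega
    obtain ⟨k, rfl⟩ : ∃ k, i = s + k := ⟨i - s, by omega⟩
    have hd : q ∣ p * k := by
      have : (q : ℤ) ∣ ((p * k : ℕ) : ℤ) := ⟨(n : ℤ) + 1 - r, by
        zify at ht hnbr; push_cast; linarith⟩
      exact_mod_cast this
    have hcop : Nat.Coprime q p := by
      rw [← Nat.isCoprime_iff_coprime]
      exact ⟨r, -s, by zify at hnbr; linarith⟩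
    obtain ⟨c, rfl⟩ := hcop.dvd_of_dvd_mul_left hd
    have : c = 1 := by
      have : c < 2 := by
        by_contra h
        nlinarith
      have : 1 ≤ c := by
        by_contra h
        obtain rfl : c = 0 := by omega
        omega
      omega
    subst this
    omega

theorem mediant_div_right (hs : 1 ≤ s) (hsq : s < q) (hnbr : q * r = p * s + 1) {j : ℕ}
    (hj : j ≤ 2 * s) : (p + r) * (2 * q + j) / (q + s) = 2 * p + r * j / s := by
  set n := r * j / s with hn
  have h1 : s * n + r * j % s = r * j := Nat.div_add_mod _ _
  have h3 : r * j % s < s := Nat.mod_lt _ hs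
  apply Nat.div_eq_of_lt_le
  · refine Nat.le_of_mul_le_mul_left (c := s) ?_ hs
    have h4 : s * n * (q + s) ≤ r * j * (q + s) := Nat.mul_le_mul_right _ (by omega)
    have h5 : q * r * j = (p * s + 1) * j := by rw [hnbr]
    have h6 : q * r * s = (p * s + 1) * s := by rw [hnbr]
    nlinarith
  · refine Nat.lt_of_mul_lt_mul_left (a := s) ?_
    obtain ⟨t, ht⟩ : ∃ t, s * (n + 1) = r * j + t := ⟨s - r * j % s, by rw [mul_add]; omega⟩
    have ht1 : 1 ≤ t := by nlinarith
    nlinarith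

theorem div_of_lt_right (hs : 1 ≤ s) (hsq : s < q) (hnbr : q * r = p * s + 1) {i : ℕ}
    (hi : i < s) : p * i / q = r * i / s := by
  have hq : 0 < q := by omega
  set n := r * i / s with hn
  have h1 : s * n + r * i % s = r * i := Nat.div_add_mod _ _
  have h3 : r * i % s < s := Nat.mod_lt _ hs
  apply Nat.div_eq_of_lt_le
  · by_contra hc
    push Not at hc
    have : s * (p * i + 1) ≤ s * (n * q) := Nat.mul_le_mul_left _ hc
    have h4 : s * n * q ≤ r * i * q := Nat.mul_le_mul_right _ (by omega)
    have h5 : q * r * i = (p * s + 1) * i := by rw [hnbr]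
    nlinarith
  · refine Nat.lt_of_mul_lt_mul_left (a := s) ?_
    nlinarith

theorem div_right_eq (hq : 1 ≤ q) (hnbr : q * r = p * s + 1) : p * s / q + 1 = r := by
  obtain ⟨t, rfl⟩ : ∃ t, r = t + 1 := ⟨r - 1, by
    have : r ≠ 0 := by rintro rfl; omega
    omega⟩
  congr 1
  apply Nat.div_eq_of_lt_le <;> nlinarith

theorem div_shift (hs : 1 ≤ s) (hsq : s < q) (hrp : r ≤ p) (hnbr : q * r = p * s + 1) {k : ℕ}
    (hk : 1 ≤ k) (hkv : k ≤ q - s) :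
    p * (s + k) / q = r + (p - r) * k / (q - s) := by
  obtain ⟨v, rfl⟩ : ∃ v, q = s + v := ⟨q - s, by omega⟩
  obtain ⟨u, rfl⟩ : ∃ u, p = r + u := ⟨p - r, by omega⟩
  simp only [Nat.add_sub_cancel_left] at *
  have hv : 0 < v := by omega
  set n := u * k / v with hn
  have h1 : v * n + u * k % v = u * k := Nat.div_add_mod _ _
  have h3 : u * k % v < v := Nat.mod_lt _ hv
  apply Nat.div_eq_of_lt_le
  · by_contra hc
    push Not at hc
    have h4 : v * n * (s + v) ≤ u * k * (s + v) := Nat.mul_le_mul_right _ (by omega)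
    have h5 : v * r = u * s + 1 := by linarith
    have h6 : v * r * k = (u * s + 1) * k := by rw [h5]
    have h7 : v * r * v = (u * s + 1) * v := by rw [h5]
    have : v * ((r + u) * (s + k) + 1) ≤ v * ((r + n) * (s + v)) := Nat.mul_le_mul_left _ hc
    nlinarith
  · refine Nat.lt_of_mul_lt_mul_left (a := v) ?_
    nlinarith

end Neighbours

/-! ### Letters and traces in `SL(2, ℂ)` -/

/-- The parabolic element `X` of `SL(2, ℂ)`. -/
def xSL : SL(2, ℂ) := ⟨!![1, 1; 0, 1], by simp [Matrix.det_fin_two_of]⟩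

/-- The parabolic element `Y` of `SL(2, ℂ)`. -/
def ySL (z : ℂ) : SL(2, ℂ) := ⟨!![1, 0; z, 1], by simp [Matrix.det_fin_two_of]⟩

theorem coe_xSL : (xSL : Matrix (Fin 2) (Fin 2) ℂ) = !![1, 1; 0, 1] := rfl

theorem coe_ySL (z : ℂ) : (ySL z : Matrix (Fin 2) (Fin 2) ℂ) = !![1, 0; z, 1] := rfl

/-- The letter `Y ^ e` if `i` is odd and `X ^ e` if `i` is even. -/
def letterSL (z : ℂ) (i : ℕ) (e : ℤˣ) : SL(2, ℂ) :=
  (if i % 2 = 1 then ySL z else xSL) ^ (e : ℤ)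

/-- The `i`-th letter of the Farey word `W_{p/q}` in `SL(2, ℂ)`. -/
def fareyLetterSL (z : ℂ) (p q i : ℕ) : SL(2, ℂ) := letterSL z i (floorSign p q i)

theorem letterSL_neg (z : ℂ) (i : ℕ) (e : ℤˣ) : letterSL z i (-e) = (letterSL z i e)⁻¹ := by
  rw [letterSL, letterSL, Units.val_neg, zpow_neg]

theorem fareyLetterM_eq (z : ℂ) (p q i : ℕ) :
    fareyLetterM 1 1 z p q i = (fareyLetterSL z p q i : Matrix (Fin 2) (Fin 2) ℂ) := by
  have hX : Xmat 1 = (xSL : Matrix (Fin 2) (Fin 2) ℂ) := by simp [Xmat, coe_xSL]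
  have hY : Ymat 1 z = (ySL z : Matrix (Fin 2) (Fin 2) ℂ) := by simp [Ymat, coe_ySL]
  have hinv (g : SL(2, ℂ)) :
      (g : Matrix (Fin 2) (Fin 2) ℂ)⁻¹ = ((g⁻¹ : SL(2, ℂ)) : Matrix (Fin 2) (Fin 2) ℂ) := by
    refine Matrix.inv_eq_left_inv ?_
    rw [← Matrix.SpecialLinearGroup.coe_mul, inv_mul_cancel, Matrix.SpecialLinearGroup.coe_one]
  simp only [fareyLetterM, fareyLetterSL, letterSL, fareySign_eq_floorSign, hX, hY]
  rcases Int.units_eq_one_or (floorSign p q i) with h | h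
  · rw [h, if_pos rfl]; split_ifs <;> simp
  · rw [h, if_neg (by decide)]; split_ifs <;> simp [hinv]

/-- The trace of an element of `SL(2, ℂ)`. -/
def trSL (g : SL(2, ℂ)) : ℂ := Matrix.trace (g : Matrix (Fin 2) (Fin 2) ℂ)

theorem fareyPoly_eq_trSL (z : ℂ) (p q : ℕ) : fareyPoly 1 1 z p q =
    trSL (seqProd (fareyLetterSL z p q) (2 * q)) := by
  rw [fareyPoly, fareyWord, seqProd, trSL]
  congr 1
  generalize List.range (2 * q) = l
  induction l with
  | nil => simp
  | cons a l ih =>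
    rw [List.map_cons, List.prod_cons, ih, fareyLetterM_eq, List.map_cons, List.prod_cons,
      Matrix.SpecialLinearGroup.coe_mul]

theorem trSL_mul_comm (g h : SL(2, ℂ)) : trSL (g * h) = trSL (h * g) := by
  simp only [trSL, Matrix.SpecialLinearGroup.coe_mul]
  exact Matrix.trace_mul_comm _ _

theorem trSL_conj (g h : SL(2, ℂ)) : trSL (g * h * g⁻¹) = trSL h := by
  rw [trSL_mul_comm, inv_mul_cancel_left]

theorem trSL_mul_trSL (g h : SL(2, ℂ)) : trSL g * trSL h = trSL (g * h) + trSL (g * h⁻¹) := by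
  simp only [trSL, Matrix.SpecialLinearGroup.coe_mul, Matrix.SpecialLinearGroup.coe_inv, Matrix.adjugate_fin_two,
    Matrix.trace_fin_two, Matrix.mul_apply, Fin.sum_univ_two, Matrix.of_apply, Matrix.cons_val',
    Matrix.cons_val_zero, Matrix.cons_val_one, Matrix.cons_val_fin_one]
  ring

theorem trSL_inv (g : SL(2, ℂ)) : trSL g⁻¹ = trSL g := by
  simp [trSL, Matrix.SpecialLinearGroup.coe_inv, Matrix.adjugate_fin_two, Matrix.trace_fin_two, add_comm]

theorem trSL_letterSL (z : ℂ) (i : ℕ) (e : ℤˣ) : trSL (letterSL z i e) = 2 := by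
  have h : trSL (letterSL z i 1) = 2 := by
    simp only [letterSL]
    split_ifs <;> simp [trSL, coe_xSL, coe_ySL, Matrix.trace_fin_two] <;> norm_num
  rcases Int.units_eq_one_or e with rfl | rfl
  · exact h
  · rw [letterSL_neg, trSL_inv, h]

theorem trSL_conj_letterSL_mul_xSL (z : ℂ) (g : SL(2, ℂ)) (i : ℕ) (e : ℤˣ) :
    trSL (g * letterSL z i e * g⁻¹ * xSL) + trSL (g * letterSL z i e * g⁻¹ * xSL⁻¹) = 4 := by
  have hx : trSL xSL = 2 := by simpa [letterSL] using trSL_letterSL z 0 1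
  rw [← trSL_mul_trSL, trSL_conj, trSL_letterSL, hx]
  norm_num

/-- For `z ≠ 0`, exchanging the generators and inverting both of them are realised by
conjugations. -/
theorem exists_conj_letterSL {z : ℂ} (hz : z ≠ 0) (s : ℕ) (η : ℤˣ) :
    ∃ g : SL(2, ℂ), ∀ i e, letterSL z (s + i) (η * e) = g * letterSL z i e * g⁻¹ := by
  obtain ⟨t, ht⟩ := IsAlgClosed.exists_pow_nat_eq (-z) (n := 2) (by norm_num)
  have ht0 : t ≠ 0 := by rintro rfl; apply hz; simpa using ht.symm
  have hzt : z = -t ^ 2 := by rw [ht]; ring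
  have h_swap : ∃ g : SL(2, ℂ), ∀ i e, letterSL z (1 + i) e = g * letterSL z i e * g⁻¹ := by
    obtain ⟨g, hg⟩ : ∃ g : SL(2, ℂ), (g : Matrix (Fin 2) (Fin 2) ℂ) = !![0, t⁻¹; -t, 0] :=
      ⟨⟨_, by simp [Matrix.det_fin_two_of, ht0]⟩, rfl⟩
    have hx : g * xSL * g⁻¹ = ySL z := by
      rw [mul_inv_eq_iff_eq_mul]
      ext i j
      fin_cases i <;> fin_cases j <;> (simp [hg, coe_xSL, coe_ySL, hzt]; try field_simp)
    have hy : g * ySL z * g⁻¹ = xSL := by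
      rw [mul_inv_eq_iff_eq_mul]
      ext i j
      fin_cases i <;> fin_cases j <;> (simp [hg, coe_xSL, coe_ySL, hzt]; try field_simp)
    refine ⟨g, fun i e => ?_⟩
    rw [letterSL, letterSL, ← conj_zpow]
    congr 1
    rcases Nat.mod_two_eq_zero_or_one i with h | h
    · rw [if_pos (by omega), if_neg (by omega), hx]
    · rw [if_neg (by omega), if_pos h, hy]
  have h_neg : ∃ g : SL(2, ℂ), ∀ i e, letterSL z i (-e) = g * letterSL z i e * g⁻¹ := by
    obtain ⟨g, hg⟩ : ∃ g : SL(2, ℂ),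
        (g : Matrix (Fin 2) (Fin 2) ℂ) = !![Complex.I, 0; 0, -Complex.I] :=
      ⟨⟨_, by simp [Matrix.det_fin_two_of]⟩, rfl⟩
    have hx : g * xSL * g⁻¹ = xSL⁻¹ := by
      rw [mul_inv_eq_iff_eq_mul]
      ext i j
      fin_cases i <;> fin_cases j <;> simp [hg, coe_xSL, Matrix.adjugate_fin_two]
    have hy : g * ySL z * g⁻¹ = (ySL z)⁻¹ := by
      rw [mul_inv_eq_iff_eq_mul]
      ext i j
      fin_cases i <;> fin_cases j <;> simp [hg, coe_ySL, Matrix.adjugate_fin_two, mul_comm]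
    refine ⟨g, fun i e => ?_⟩
    rw [letterSL, letterSL, ← conj_zpow, Units.val_neg, zpow_neg, ← inv_zpow]
    congr 1
    split_ifs
    · exact hy.symm
    · exact hx.symm
  have h_sign : ∃ g : SL(2, ℂ), ∀ i e, letterSL z i (η * e) = g * letterSL z i e * g⁻¹ := by
    rcases Int.units_eq_one_or η with rfl | rfl
    · exact ⟨1, by simp⟩
    · simpa using h_neg
  induction s with
  | zero => simpa using h_sign
  | succ s ih =>
    obtain ⟨g, hg⟩ := ih
    obtain ⟨h, hh⟩ := h_swap
    refine ⟨h * g, fun i e => ?_⟩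
    rw [add_comm s 1, add_assoc, hh, hg]
    group

theorem fareyPoly_zero (p q : ℕ) : fareyPoly 1 1 0 p q = 2 := by
  rw [fareyPoly_eq_trSL]
  have h : ∀ n, ∃ t : ℂ, ((seqProd (fareyLetterSL 0 p q) n : SL(2, ℂ)) : Matrix (Fin 2) (Fin 2) ℂ)
      = !![1, t; 0, 1] := by
    intro n
    induction n with
    | zero => exact ⟨0, by simp [seqProd, Matrix.one_fin_two]⟩
    | succ n ih =>
      obtain ⟨t, ht⟩ := ih
      have hl : ∃ c : ℂ, (fareyLetterSL 0 p q (n + 1) : Matrix (Fin 2) (Fin 2) ℂ)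
          = !![1, c; 0, 1] := by
        rw [fareyLetterSL, letterSL]
        rcases Int.units_eq_one_or (floorSign p q (n + 1)) with h | h <;> rw [h] <;> split_ifs <;>
          simp [coe_xSL, coe_ySL, Matrix.adjugate_fin_two]
      obtain ⟨c, hc⟩ := hl
      exact ⟨c + t, by rw [seqProd_succ, Matrix.SpecialLinearGroup.coe_mul, ht, hc]; simp⟩
  obtain ⟨t, ht⟩ := h (2 * q)
  rw [trSL, ht]
  simp [Matrix.trace_fin_two]
  norm_num

/-! ### The recursion -/

theorem fareyLetterSL_two_mul (z : ℂ) (m : ℕ) {n : ℕ} (hn : 1 ≤ n) :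
    fareyLetterSL z m n (2 * n) = xSL := by
  simp [fareyLetterSL, floorSign_two_mul m hn, letterSL]

theorem fareyLetterSL_add {m n k : ℕ} (z : ℂ) (hmn : Nat.Coprime m n) (hk : 1 ≤ k) (hkn : k < n) :
    fareyLetterSL z m n (n + k) = (fareyLetterSL z m n (n - k))⁻¹ := by
  rw [fareyLetterSL, fareyLetterSL, floorSign_add_eq_neg hmn hk hkn, letterSL_neg]
  congr 1
  simp only [letterSL]
  rw [show (n + k) % 2 = (n - k) % 2 by omega]

theorem seqProd_fareyLetterSL {m n : ℕ} (z : ℂ) (hn : 1 ≤ n) (hmn : Nat.Coprime m n) :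
    seqProd (fareyLetterSL z m n) (2 * n) =
      seqProd (fareyLetterSL z m n) (n - 1) * fareyLetterSL z m n n *
        (seqProd (fareyLetterSL z m n) (n - 1))⁻¹ * xSL := by
  rw [seqProd_antisymm hn fun k h1 h2 => fareyLetterSL_add z hmn h1 h2, fareyLetterSL_two_mul z m hn]

section Recursion

variable {p q r s : ℕ}

theorem trSL_mul_add_trSL_mediant (z : ℂ) (hs : 1 ≤ s) (hsq : s < q)
    (hnbr : q * r = p * s + 1) :
    trSL (seqProd (fareyLetterSL z p q) (2 * q) * seqProd (fareyLetterSL z r s) (2 * s)) +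
      trSL (seqProd (fareyLetterSL z (p + r) (q + s)) (2 * (q + s))) = 4 := by
  have hcop : Nat.Coprime (p + r) (q + s) := by
    rw [← Nat.isCoprime_iff_coprime]
    exact ⟨-s, r, by zify at hnbr; push_cast; linarith⟩
  have hn : 1 ≤ q + s := by omega
  set c := fareyLetterSL z (p + r) (q + s) with hc
  let d : ℕ → SL(2, ℂ) := fun i => if i = q + s then (c i)⁻¹ else c i
  have hd : ∀ i, i ≠ q + s → d i = c i := fun i hi => if_neg hi
  have hleft : ∀ i, 1 ≤ i → i ≤ 2 * q → fareyLetterSL z p q i = d i := by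
    intro i _ hi
    by_cases hne : i = q + s
    · simp only [d, if_pos hne, hc, fareyLetterSL, ← letterSL_neg]
      congr 1
      rw [hne, floorSign_self _ hn, floorSign, mul_add, mul_comm p q,
        Nat.mul_add_div (by omega : 0 < q)]
      have := div_right_eq (by omega : 1 ≤ q) hnbr
      rw [← this, ← add_assoc p, add_right_comm _ 1, pow_succ]
      simp
    · rw [hd i hne, hc, fareyLetterSL, fareyLetterSL, floorSign, floorSign,
        mediant_div_left hs hsq hnbr hi hne]
  have hright : ∀ j, 1 ≤ j → j ≤ 2 * s → fareyLetterSL z r s j = d (2 * q + j) := by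
    intro j _ hj
    rw [hd _ (by omega), hc, fareyLetterSL, fareyLetterSL, floorSign, floorSign,
      mediant_div_right hs hsq hnbr hj]
    rw [show 2 * p + r * j / s + (2 * q + j) = 2 * (p + q) + (r * j / s + j) by ring,
      pow_add _ (2 * _), pow_mul]
    simp [letterSL]
  rw [seqProd_congr hleft, seqProd_congr hright, ← seqProd_add, ← mul_add,
    seqProd_antisymm hn fun k h1 h2 => by
      rw [hd _ (by omega), hd _ (by omega)]; exact fareyLetterSL_add z hcop h1 h2,
    seqProd_fareyLetterSL z hn hcop, hd (2 * (q + s)) (by omega), hc,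
    fareyLetterSL_two_mul z _ hn, ← hc, seqProd_congr fun i _ hi => hd i (by omega)]
  simp only [d, if_true]
  generalize seqProd c (q + s - 1) = g
  have h := trSL_conj_letterSL_mul_xSL z g (q + s) (floorSign (p + r) (q + s) (q + s))
  rw [← fareyLetterSL, ← hc] at h
  have hinv : trSL (g * (c (q + s))⁻¹ * g⁻¹ * xSL) = trSL (g * c (q + s) * g⁻¹ * xSL⁻¹) := by
    rw [← trSL_inv (_ * xSL⁻¹), trSL_mul_comm]
    refine congrArg trSL ?_
    group
  rw [add_comm, hinv, h]

theorem trSL_mul_inv_add_trSL_sub {z : ℂ} (hz : z ≠ 0) (hs : 1 ≤ s) (hsq : s < q)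
    (hrp : r ≤ p) (hcop1 : Nat.Coprime p q) (hcop2 : Nat.Coprime r s)
    (hnbr : q * r = p * s + 1) :
    trSL (seqProd (fareyLetterSL z p q) (2 * q) * (seqProd (fareyLetterSL z r s) (2 * s))⁻¹) +
      trSL (seqProd (fareyLetterSL z (p - r) (q - s)) (2 * (q - s))) = 4 := by
  have hcop : Nat.Coprime (p - r) (q - s) := by
    rw [← Nat.isCoprime_iff_coprime]
    exact ⟨-s, r, by push_cast [hrp, hsq.le]; zify at hnbr; linarith⟩
  have hv : 1 ≤ q - s := by omega
  rw [seqProd_fareyLetterSL z (by omega) hcop1, seqProd_fareyLetterSL z hs hcop2,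
    seqProd_fareyLetterSL z hv hcop]
  obtain ⟨g, hg⟩ := exists_conj_letterSL hz s ((-1) ^ (r + s))
  have hshift : ∀ k, 1 ≤ k → k ≤ q - s →
      fareyLetterSL z p q (s + k) = g * fareyLetterSL z (p - r) (q - s) k * g⁻¹ := by
    intro k h1 h2
    rw [fareyLetterSL, fareyLetterSL, ← hg, floorSign, floorSign, ← pow_add,
      div_shift hs hsq hrp hnbr h1 h2]
    congr 2
    ring
  have hinit : seqProd (fareyLetterSL z p q) (s - 1) = seqProd (fareyLetterSL z r s) (s - 1) :=
    seqProd_congr fun i h1 h2 => by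
      rw [fareyLetterSL, fareyLetterSL, floorSign, floorSign,
        div_of_lt_right hs hsq hnbr (by omega : i < s)]
  have hbs : fareyLetterSL z r s s = g * xSL * g⁻¹ := by
    have := hg 0 1
    rw [add_zero, mul_one] at this
    rw [fareyLetterSL, floorSign_self r hs, this]
    simp [letterSL]
  have has : fareyLetterSL z p q s = (fareyLetterSL z r s s)⁻¹ := by
    rw [fareyLetterSL, fareyLetterSL, ← letterSL_neg, floorSign_self r hs, floorSign,
      ← div_right_eq (by omega : 1 ≤ q) hnbr, add_right_comm _ 1, pow_succ]
    simp
  have hsplit : seqProd (fareyLetterSL z p q) (q - 1) =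
      seqProd (fareyLetterSL z r s) (s - 1) * (g * xSL⁻¹ * g⁻¹) *
        (g * seqProd (fareyLetterSL z (p - r) (q - s)) (q - s - 1) * g⁻¹) := by
    rw [show q - 1 = (s - 1 + 1) + (q - s - 1) by omega, seqProd_add, seqProd_succ, hinit,
      show s - 1 + 1 = s by omega, has, hbs,
      seqProd_congr fun k h1 h2 => hshift k h1 (by omega), seqProd_conj]
    group
  have haq := hshift (q - s) hv le_rfl
  rw [show s + (q - s) = q by omega] at haq
  rw [hsplit, haq, hbs]
  generalize seqProd (fareyLetterSL z r s) (s - 1) = b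
  generalize seqProd (fareyLetterSL z (p - r) (q - s)) (q - s - 1) = u
  rw [← trSL_conj_letterSL_mul_xSL z u (q - s) (floorSign (p - r) (q - s) (q - s)), add_comm,
    ← fareyLetterSL]
  generalize fareyLetterSL z (p - r) (q - s) (q - s) = l
  refine congrArg₂ (· + ·) rfl ?_
  rw [← trSL_conj (b * g * xSL⁻¹) (u * l * u⁻¹ * xSL⁻¹)]
  refine congrArg trSL ?_
  group

end Recursion

/-- Recursion formula in the parabolic case `α = β = 1`: for Farey neighbours `p/q < r/s`
in `[0,1]` with `s < q`, `Φ_{p/q} Φ_{r/s} + Φ_{(p+r)/(q+s)} + Φ_{(p−r)/(q−s)} = 8`. -/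
theorem recursion_parabolic (z : ℂ)
    (p q r s : ℕ) (hs : 1 ≤ s) (hsq : s < q) (hpq : p ≤ q) (hrs : r ≤ s)
    (hcop1 : Nat.Coprime p q) (hcop2 : Nat.Coprime r s) (hnbr : q * r = p * s + 1) :
    fareyPoly 1 1 z p q * fareyPoly 1 1 z r s + fareyPoly 1 1 z (p + r) (q + s) +
      fareyPoly 1 1 z (p - r) (q - s) = 8 := by
  rcases eq_or_ne z 0 with rfl | hz
  · simp only [fareyPoly_zero]
    norm_num
  have hrp : r ≤ p := by
    by_contra h
    push Not at h
    nlinarith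
  simp only [fareyPoly_eq_trSL]
  rw [trSL_mul_trSL]
  linear_combination trSL_mul_add_trSL_mediant z hs hsq hnbr +
    trSL_mul_inv_add_trSL_sub hz hs hsq hrp hcop1 hcop2 hnbr
end

section
/- Let R be a commutative ring and let F be a homogeneous Farey recursive function with values in R. Let γ_L, γ_R be Farey neighbours with mediant α = γ_L ⊕ γ_R, let (β_k)_{k∈ℤ} be the associated boundary sequence, and set M_α = [[0, 1], [−1, −F(α)]], a matrix of determinant 1 over R (hence invertible). Then for every integer n ∈ ℤ, M_α^n · (F(β_0), F(β_1))ᵀ = (F(β_n), F(β_{n+1}))ᵀ. -/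
/-- A normalised pair `(p, q) ∈ ℤ × ℤ` representing an extended rational: `gcd(p,q) = 1`
and either `q > 0`, or `q = 0` and `p = 1` (representing `∞`). -/
def Normalised (x : ℤ × ℤ) : Prop :=
  Int.gcd x.1 x.2 = 1 ∧ (0 < x.2 ∨ (x.2 = 0 ∧ x.1 = 1))

/-- Two pairs `(p,q)` and `(r,s)` are Farey neighbours if `|ps − qr| = 1`.
Their mediant is the componentwise sum `(p+r, q+s)`. -/
def FareyNbr (x y : ℤ × ℤ) : Prop := (x.1 * y.2 - x.2 * y.1).natAbs = 1

/-- `F` is a homogeneous Farey recursive function: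
`F((γ ⊕ α) ⊕ α) = −F(γ) − F(α)·F(γ ⊕ α)` for Farey neighbours `γ, α`. -/
def IsHomFareyRecursive {R : Type*} [CommRing R] (F : ℤ × ℤ → R) : Prop :=
  ∀ γ α : ℤ × ℤ, Normalised γ → Normalised α → FareyNbr γ α →
    F (γ + α + α) = -F γ - F α * F (γ + α)

theorem FareyNbr.symm {x y : ℤ × ℤ} (h : FareyNbr x y) : FareyNbr y x := by
  unfold FareyNbr at *
  rw [← h, ← Int.natAbs_neg]
  congr 1
  ring

theorem FareyNbr.add_zsmul_left {x y : ℤ × ℤ} (h : FareyNbr x y) (k : ℤ) :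
    FareyNbr (x + k • y) y := by
  unfold FareyNbr at *
  rw [← h]
  congr 1
  simp only [Prod.fst_add, Prod.snd_add, Prod.smul_fst, Prod.smul_snd, smul_eq_mul]
  ring

theorem FareyNbr.add_left {x y : ℤ × ℤ} (h : FareyNbr x y) : FareyNbr (x + y) y := by
  simpa using h.add_zsmul_left 1

theorem FareyNbr.gcd_eq_one {x y : ℤ × ℤ} (h : FareyNbr x y) : Int.gcd x.1 x.2 = 1 := by
  have hdvd : (Int.gcd x.1 x.2 : ℤ) ∣ x.1 * y.2 - x.2 * y.1 :=
    dvd_sub ((Int.gcd_dvd_left ..).mul_right _) ((Int.gcd_dvd_right ..).mul_right _)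
  rw [Int.natCast_dvd, h] at hdvd
  exact Nat.dvd_one.mp hdvd

/-- The mediant of normalised Farey neighbours is normalised. -/
theorem Normalised.add {x y : ℤ × ℤ} (hx : Normalised x) (hy : Normalised y)
    (h : FareyNbr x y) : Normalised (x + y) := by
  refine ⟨h.add_left.gcd_eq_one, Or.inl ?_⟩
  rw [Prod.snd_add]
  rcases hx.2 with hx | ⟨hx, -⟩ <;> rcases hy.2 with hy | ⟨hy, -⟩
  · omega
  · omega
  · omega
  · simp [FareyNbr, hx, hy] at h

theorem Normalised.add_zsmul {x y : ℤ × ℤ} (hx : Normalised x) (hy : Normalised y)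
    (h : FareyNbr x y) {k : ℤ} (hk : 0 ≤ k) : Normalised (x + k • y) := by
  induction k, hk using Int.leInduction with
  | base => simpa using hx
  | succ k _ ih =>
    rw [add_smul, one_smul, ← add_assoc]
    exact ih.add hy (h.add_zsmul_left k)

/-- The recursion along the ray `γ + k • α`, `k ≥ 0`. -/
theorem IsHomFareyRecursive.add_zsmul {R : Type*} [CommRing R] {F : ℤ × ℤ → R}
    (hF : IsHomFareyRecursive F) {γ α : ℤ × ℤ} (hγ : Normalised γ) (hα : Normalised α)
    (h : FareyNbr γ α) {k : ℤ} (hk : 0 ≤ k) :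
    F (γ + (k + 2) • α) = -F (γ + k • α) - F α * F (γ + (k + 1) • α) := by
  convert hF _ α (hγ.add_zsmul hα h hk) hα (h.add_zsmul_left k) using 2
  · module
  · congr 2
    module

/-- The recursion along the bi-infinite boundary sequence about `γL + γR`. -/
theorem IsHomFareyRecursive.boundary {R : Type*} [CommRing R] {F : ℤ × ℤ → R}
    (hF : IsHomFareyRecursive F) {γL γR α : ℤ × ℤ} (hγL : Normalised γL)
    (hγR : Normalised γR) (hnbr : FareyNbr γL γR) (hα : α = γL + γR) {β : ℤ → ℤ × ℤ}
    (hβ : ∀ k : ℤ, β k = if 0 ≤ k then γR + k • α else γL + (-k - 1) • α) (n : ℤ) :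
    F (β (n + 2)) = -F (β n) - F α * F (β (n + 1)) := by
  have hαn : Normalised α := hα ▸ hγL.add hγR hnbr
  have hR : FareyNbr γR α := hα ▸ hnbr.add_left.symm
  have hL : FareyNbr γL α := by
    rw [hα, add_comm]
    exact hnbr.symm.add_left.symm
  rcases le_or_gt 0 n with hn | hn
  · simp only [hβ, if_pos hn, if_pos (show 0 ≤ n + 1 by omega), if_pos (show 0 ≤ n + 2 by omega)]
    exact hF.add_zsmul hγR hαn hR hn
  obtain rfl | rfl | hn : n = -1 ∨ n = -2 ∨ n ≤ -3 := by omega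
  · have key := hF γL γR hγL hγR hnbr
    rw [← hα] at key
    simp only [hβ]
    norm_num
    rw [add_comm γR, key]
    ring
  · have key := hF γR γL hγR hγL hnbr.symm
    rw [add_comm γR, ← hα] at key
    simp only [hβ]
    norm_num
    rw [add_comm γL, key]
    ring
  · have key := hF.add_zsmul hγL hαn hL (show 0 ≤ -n - 3 by omega)
    simp only [hβ, if_neg (show ¬ 0 ≤ n by omega), if_neg (show ¬ 0 ≤ n + 1 by omega),
      if_neg (show ¬ 0 ≤ n + 2 by omega)]
    rw [show -n - 3 + 2 = -n - 1 by ring, show -n - 3 + 1 = -(n + 1) - 1 by ring,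
      show -n - 3 = -(n + 2) - 1 by ring] at key
    rw [key]
    ring

/-- For a homogeneous Farey recursive function `F`, the values along the boundary sequence
`(β_k)` about `α = γ_L ⊕ γ_R` are computed by integer powers of the determinant-one matrix
`M_α = [[0, 1], [−1, −F(α)]]`. -/
theorem hom_farey_recursive_boundary {R : Type*} [CommRing R] (F : ℤ × ℤ → R)
    (hF : IsHomFareyRecursive F)
    (γL γR : ℤ × ℤ) (hγL : Normalised γL) (hγR : Normalised γR) (hnbr : FareyNbr γL γR)
    (α : ℤ × ℤ) (hα : α = γL + γR)
    (β : ℤ → ℤ × ℤ) (hβ : ∀ k : ℤ, β k = if 0 ≤ k then γR + k • α else γL + (-k - 1) • α)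
    (M : Matrix (Fin 2) (Fin 2) R) (hM : M = !![0, 1; -1, -F α]) :
    ∀ n : ℤ, (M ^ n).mulVec ![F (β 0), F (β 1)] = ![F (β n), F (β (n + 1))] := by
  have hdet : IsUnit M.det := by simp [hM, Matrix.det_fin_two]
  have step (n : ℤ) : M.mulVec ![F (β n), F (β (n + 1))] = ![F (β (n + 1)), F (β (n + 1 + 1))] := by
    rw [add_assoc n 1 1, one_add_one_eq_two, hF.boundary hγL hγR hnbr hα hβ n, hM]
    ext i
    fin_cases i <;> simp [Matrix.mulVec, dotProduct, Fin.sum_univ_two, sub_eq_add_neg]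
  have pow_succ (n : ℤ) : M ^ (n + 1) = M * M ^ n := by
    rw [add_comm, Matrix.zpow_one_add hdet]
  intro n
  induction n with
  | zero => simp
  | succ n ih => rw [pow_succ, ← Matrix.mulVec_mulVec, ih, step]
  | pred n ih =>
    apply Matrix.mulVec_injective_of_isUnit ((Matrix.isUnit_iff_isUnit_det M).2 hdet)
    rw [step, Matrix.mulVec_mulVec, ← pow_succ, sub_add_cancel, ih]
end
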